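/- The cut rule (rule k) is admissible in the calculus N: for all formulas 𝔄, 𝔅 and every right side ℭ (a formula or empty), if the sequents 𝔄 → 𝔅 and 𝔅 → ℭ are derivable in N, then the sequent 𝔄 → ℭ is derivable in N. -/

import Mathlib

/-!
The valuation `v` is total, so every formula has a classical truth value (`Fml.Holds`), and N is
sound and complete for these truth values; cut preserves truth, hence is admissible.

Soundness (`NDer.sound`) is an induction on derivations. Completeness comes from two facts proved by
induction on the formula: a true formula is derivable from the empty left side, and a false formula
on the left derives every right side (`Fml.derivable_of_holds_and_of_not_holds`). The ω-rule handles
true universal quantifications, and the two facts exchange roles at a negation. Given `𝔄 → 𝔅` and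
`𝔅 → ℭ`, soundness shows that either `𝔄` is false, or `ℭ` is a true formula; in both cases `𝔄 → ℭ` is
derivable. The argument is semantic and classical: it does not transform the given derivations.
-/

/-- Formulas of the calculus N over a set `Φ` of prime formulas:
prime formulas, conjunctions, negations, and formal universal
quantifications over ℕ-indexed families. -/
inductive Fml (Φ : Type) : Type
  | prime : Φ → Fml Φ
  | conj : Fml Φ → Fml Φ → Fml Φ
  | neg : Fml Φ → Fml Φ
  | all : (ℕ → Fml Φ) → Fml Φ

/-- The finite conjunction of formulas represented by a formula: a left side
`𝔄₁ ∧ ⋯ ∧ 𝔄ₘ` is regarded up to order and association (rules (h) and (i)),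
so it is the multiset of its top-level conjuncts. -/
def Fml.parts {Φ : Type} : Fml Φ → Multiset (Fml Φ)
  | .conj A B => A.parts + B.parts
  | A => {A}

/-- Derivability of sequents in the calculus N over the prime formulas `Φ`
with valuation `v`. A sequent has a left side which is a finite conjunction
(a multiset, possibly empty) of formulas and a right side which is a formula
or empty (`none`). Exchange and associativity of conjunction on the left
(rules (h) and (i)) are built into the multiset representation. -/
inductive NDer {Φ : Type} (v : Φ → Prop) : Multiset (Fml Φ) → Option (Fml Φ) → Prop
  /-- basic sequents `P → Q` whenever `v P` implies `v Q`. -/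
  | basicPQ {P Q : Φ} : (v P → v Q) → NDer v {Fml.prime P} (some (Fml.prime Q))
  /-- basic sequents `→ P` whenever `v P` holds. -/
  | basicT {P : Φ} : v P → NDer v 0 (some (Fml.prime P))
  /-- basic sequents `P →` whenever `v P` fails. -/
  | basicF {P : Φ} : ¬ v P → NDer v {Fml.prime P} none
  /-- rule (a): from `ℭ → 𝔄` and `ℭ → 𝔅` infer `ℭ → 𝔄 ∧ 𝔅`. -/
  | ruleA {Γ : Multiset (Fml Φ)} {A B : Fml Φ} :
      NDer v Γ (some A) → NDer v Γ (some B) → NDer v Γ (some (Fml.conj A B))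
  /-- rule (b): from `𝔄 ∧ ℭ →` infer `ℭ → 𝔄̄`. -/
  | ruleB {Γ : Multiset (Fml Φ)} {A : Fml Φ} :
      NDer v (A.parts + Γ) none → NDer v Γ (some (Fml.neg A))
  /-- rule (c), the ω-rule: from `ℭ → 𝔄(n)` for every `n` infer `ℭ → (x)𝔄(x)`. -/
  | ruleC {Γ : Multiset (Fml Φ)} {f : ℕ → Fml Φ} :
      (∀ n, NDer v Γ (some (f n))) → NDer v Γ (some (Fml.all f))
  /-- rule (d): from `𝔄 → ℭ` infer `𝔄 ∧ 𝔅 → ℭ` (`ℭ` possibly empty). -/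
  | ruleD {Γ : Multiset (Fml Φ)} {C : Option (Fml Φ)} (B : Fml Φ) :
      NDer v Γ C → NDer v (B.parts + Γ) C
  /-- rule (e): from `𝔄 → 𝔅` infer `𝔄 ∧ 𝔅̄ → ℭ` (`ℭ` possibly empty). -/
  | ruleE {Γ : Multiset (Fml Φ)} {C : Option (Fml Φ)} {B : Fml Φ} :
      NDer v Γ (some B) → NDer v (Fml.neg B ::ₘ Γ) C
  /-- rule (f): from `𝔄(n) ∧ 𝔅 → ℭ` infer `(x)𝔄(x) ∧ 𝔅 → ℭ`. -/
  | ruleF {Γ : Multiset (Fml Φ)} {C : Option (Fml Φ)} {f : ℕ → Fml Φ} (n : ℕ) :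
      NDer v ((f n).parts + Γ) C → NDer v (Fml.all f ::ₘ Γ) C
  /-- rule (g), contraction: from `𝔄 ∧ 𝔄 ∧ 𝔅 → ℭ` infer `𝔄 ∧ 𝔅 → ℭ`. -/
  | ruleG {Γ : Multiset (Fml Φ)} {C : Option (Fml Φ)} {A : Fml Φ} :
      NDer v (A.parts + A.parts + Γ) C → NDer v (A.parts + Γ) C

/-- The classical truth value of a formula under the valuation `v`. -/
def Fml.Holds {Φ : Type} (v : Φ → Prop) : Fml Φ → Prop
  | .prime P => v P
  | .conj A B => A.Holds v ∧ B.Holds v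
  | .neg A => ¬ A.Holds v
  | .all f => ∀ n, (f n).Holds v

theorem Fml.forall_parts_holds {Φ : Type} (v : Φ → Prop) (A : Fml Φ) :
    (∀ X ∈ A.parts, X.Holds v) ↔ A.Holds v := by
  induction A with
  | conj A B ihA ihB =>
    simp only [Fml.parts, Multiset.mem_add, or_imp, forall_and, ihA, ihB, Fml.Holds]
  | _ => simp [Fml.parts]

/-- Soundness of N: if all formulas on the left are true, then the right side is a true formula
(in particular it is not empty). -/
theorem NDer.sound {Φ : Type} {v : Φ → Prop} {Γ : Multiset (Fml Φ)} {C : Option (Fml Φ)}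
    (h : NDer v Γ C) (hΓ : ∀ X ∈ Γ, X.Holds v) : ∃ D, C = some D ∧ D.Holds v := by
  induction h with
  | basicPQ h => exact ⟨_, rfl, h (hΓ _ (Multiset.mem_singleton_self _))⟩
  | basicT h => exact ⟨_, rfl, h⟩
  | basicF h => exact absurd (hΓ _ (Multiset.mem_singleton_self _)) h
  | ruleA _ _ ihA ihB =>
    obtain ⟨_, ⟨⟩, hA⟩ := ihA hΓ
    obtain ⟨_, ⟨⟩, hB⟩ := ihB hΓ
    exact ⟨_, rfl, hA, hB⟩
  | ruleB _ ih =>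
    refine ⟨_, rfl, fun hA => ?_⟩
    obtain ⟨_, ⟨⟩, _⟩ := ih fun X hX =>
      (Multiset.mem_add.1 hX).elim ((Fml.forall_parts_holds v _).2 hA X) (hΓ X)
  | ruleC _ ih =>
    refine ⟨_, rfl, fun n => ?_⟩
    obtain ⟨_, ⟨⟩, hn⟩ := ih n hΓ
    exact hn
  | ruleD B _ ih => exact ih fun X hX => hΓ X (Multiset.mem_add.2 (Or.inr hX))
  | ruleE _ ih =>
    obtain ⟨_, ⟨⟩, hB⟩ := ih fun X hX => hΓ X (Multiset.mem_cons_of_mem hX)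
    exact absurd hB (hΓ _ (Multiset.mem_cons_self _ _))
  | ruleF n _ ih =>
    have hall := hΓ _ (Multiset.mem_cons_self _ _)
    exact ih fun X hX => (Multiset.mem_add.1 hX).elim
      ((Fml.forall_parts_holds v _).2 (hall n) X) fun h => hΓ X (Multiset.mem_cons_of_mem h)
  | ruleG _ ih =>
    refine ih fun X hX => hΓ X ?_
    simp only [Multiset.mem_add] at hX ⊢
    tauto

theorem NDer.of_false_prime {Φ : Type} {v : Φ → Prop} {P : Φ} (hP : ¬ v P)
    (C : Option (Fml Φ)) : NDer v {Fml.prime P} C := by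
  cases C with
  | none => exact .basicF hP
  | some D =>
    induction D with
    | prime Q => exact .basicPQ fun h => absurd h hP
    | conj A B ihA ihB => exact .ruleA ihA ihB
    | neg A _ => exact .ruleB (.ruleD A (.basicF hP))
    | all f ih => exact .ruleC ih

/-- Completeness for single formulas. The two halves are proved together because each one at a
negation uses the other one at the negated formula. -/
theorem Fml.derivable_of_holds_and_of_not_holds {Φ : Type} (v : Φ → Prop) (A : Fml Φ) :
    (A.Holds v → NDer v 0 (some A)) ∧ (¬ A.Holds v → ∀ C, NDer v A.parts C) := by
  induction A with
  | prime P => exact ⟨fun h => .basicT h, fun h C => NDer.of_false_prime (P := P) h C⟩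
  | conj A B ihA ihB =>
    refine ⟨fun h => .ruleA (ihA.1 h.1) (ihB.1 h.2), fun h C => ?_⟩
    by_cases hA : A.Holds v
    · exact .ruleD A (ihB.2 (fun hB => h ⟨hA, hB⟩) C)
    · rw [Fml.parts, add_comm]
      exact .ruleD B (ihA.2 hA C)
  | neg A ih =>
    refine ⟨fun h => .ruleB ?_, fun h C => .ruleE (ih.1 (not_not.1 h))⟩
    rw [add_zero]
    exact ih.2 h none
  | all f ih =>
    refine ⟨fun h => .ruleC fun n => (ih n).1 (h n), fun h C => ?_⟩
    obtain ⟨n, hn⟩ := not_forall.1 h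
    refine NDer.ruleF (Γ := 0) (f := f) n ?_
    rw [add_zero]
    exact (ih n).2 hn C

/-- The cut rule (rule k) is admissible in the calculus N: for all formulas
`𝔄`, `𝔅` and every right side `ℭ` (a formula or empty), if `𝔄 → 𝔅` and
`𝔅 → ℭ` are derivable in N, then `𝔄 → ℭ` is derivable in N. -/
theorem ruleK_admissible {Φ : Type} (v : Φ → Prop)
    (A B : Fml Φ) (C : Option (Fml Φ))
    (h₁ : NDer v A.parts (some B))
    (h₂ : NDer v B.parts C) :
    NDer v A.parts C := by
  by_cases hA : A.Holds v
  · obtain ⟨_, ⟨⟩, hB⟩ := h₁.sound ((A.forall_parts_holds v).2 hA)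
    obtain ⟨D, rfl, hD⟩ := h₂.sound ((B.forall_parts_holds v).2 hB)
    have h := NDer.ruleD A ((D.derivable_of_holds_and_of_not_holds v).1 hD)
    rwa [add_zero] at h
  · exact (A.derivable_of_holds_and_of_not_holds v).2 hA C
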